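/- For a, b ∈ ℂ with Re a > 0, Re b > 0 and for −1 ≤ x ≤ 1, ∫_{−1}^1 (1 − tx)^{a−1} (1 − t²)^{b−1} dt = B(1/2, b) · ₂F₁((1−a)/2, (2−a)/2; b + 1/2; x²), where B denotes the Euler beta function. -/

import Mathlib

open MeasureTheory intervalIntegral

/-- The Gauss hypergeometric function `₂F₁(a,b;c;z)` as a series. -/
noncomputable def hyp2F1 (a b c z : ℂ) : ℂ :=
  ∑' n : ℕ, ((ascPochhammer ℂ n).eval a * (ascPochhammer ℂ n).eval b /
    ((ascPochhammer ℂ n).eval c * (Nat.factorial n : ℂ))) * z ^ n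

/-- The Euler beta function `B(x,y) = Γ(x)Γ(y)/Γ(x+y)`. -/
noncomputable def eulerBeta (x y : ℂ) : ℂ :=
  Complex.Gamma x * Complex.Gamma y / Complex.Gamma (x + y)

/-!
Expand `(1 - tx) ^ (a - 1)` by the binomial series and integrate term by term against the weight
`(1 - t²) ^ (b - 1)`. Odd moments vanish; by `u = t²` the moment of order `2k` is the beta integral
`B(1/2 + k, b)`, and duplicating the Pochhammer symbol, `(1 - a)₂ₖ / (2k)! · B(1/2 + k, b)` is
`B(1/2, b)` times the `k`-th coefficient of the hypergeometric series.

For the interchange, the even terms of the series of absolute values are of the same shape with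
`b` replaced by `Re b`, and each odd term is at most a constant times the even term before it.
Gauss' asymptotics of the coefficients make this summable up to `|x| = 1` if `Re a + Re b > 1`.
-/

open Asymptotics Filter Set Topology
open scoped Nat

theorem summable_of_summable_even {f : ℕ → ℝ} {C : ℝ} (hf : ∀ n, 0 ≤ f n)
    (hsucc : ∀ n, f (n + 1) ≤ C * f n) (heven : Summable fun k => f (2 * k)) : Summable f := by
  have hodd : Summable fun k => f (2 * k + 1) :=
    .of_nonneg_of_le (fun _ => hf _) (fun _ => hsucc _) (heven.mul_left C)
  exact (heven.hasSum.even_add_odd hodd.hasSum).summable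

section Pochhammer

theorem ne_neg_natCast_of_re_pos {s : ℂ} (hs : 0 < s.re) (m : ℕ) : s ≠ -m := by
  rintro rfl
  simp only [Complex.neg_re, Complex.natCast_re] at hs
  linarith [m.cast_nonneg (α := ℝ)]

theorem ascPochhammer_eval_eq_prod_range {R : Type*} [CommSemiring R] (n : ℕ) (s : R) :
    (ascPochhammer R n).eval s = ∏ j ∈ Finset.range n, (s + j) := by
  induction n with
  | zero => simp
  | succ n ih => rw [ascPochhammer_succ_eval, ih, Finset.prod_range_succ]

theorem ascPochhammer_eval_ne_zero {s : ℂ} (hs : ∀ m : ℕ, s ≠ -m) (n : ℕ) :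
    (ascPochhammer ℂ n).eval s ≠ 0 := by
  rw [Ne, ascPochhammer_eval_eq_zero_iff]
  rintro ⟨m, -, hm⟩
  exact hs m (neg_eq_iff_eq_neg.mp hm.symm)

theorem ascPochhammer_two_mul_eval {K : Type*} [Field K] [NeZero (2 : K)] (k : ℕ) (s : K) :
    (ascPochhammer K (2 * k)).eval s =
      4 ^ k * (ascPochhammer K k).eval (s / 2) * (ascPochhammer K k).eval ((s + 1) / 2) := by
  induction k with
  | zero => simp
  | succ k ih =>
    have h2 : (2 : K) ≠ 0 := two_ne_zero
    rw [show 2 * (k + 1) = 2 * k + 1 + 1 by ring]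
    simp only [ascPochhammer_succ_eval, ih]
    push_cast
    field_simp
    ring

theorem factorial_two_mul_eq_ascPochhammer {K : Type*} [Field K] [NeZero (2 : K)] (k : ℕ) :
    ((2 * k)! : K) = 4 ^ k * (ascPochhammer K k).eval (1 / 2) * k ! := by
  have h2 : (2 : K) ≠ 0 := two_ne_zero
  rw [← ascPochhammer_eval_one, ascPochhammer_two_mul_eval, one_add_one_eq_two, div_self h2,
    ascPochhammer_eval_one]

theorem tendsto_ascPochhammer_div_factorial (s : ℂ) :
    Tendsto (fun n : ℕ => (ascPochhammer ℂ n).eval s / n ! / (n : ℂ) ^ (s - 1)) atTop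
      (𝓝 (Complex.Gamma s)⁻¹) := by
  by_cases hs : ∀ m : ℕ, s ≠ -m
  · have hlim := ((Complex.GammaSeq_tendsto_Gamma s).inv₀ (Complex.Gamma_ne_zero hs)).mul
      (tendsto_natCast_div_add_atTop s)
    rw [mul_one] at hlim
    refine hlim.congr' ?_
    filter_upwards [eventually_ne_atTop 0] with n hn
    have hn' : (n : ℂ) ≠ 0 := Nat.cast_ne_zero.mpr hn
    have hsn : s + n ≠ 0 := fun h => hs n (eq_neg_of_add_eq_zero_left h)
    rw [Complex.GammaSeq, ← ascPochhammer_eval_eq_prod_range, ascPochhammer_succ_eval,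
      Complex.cpow_sub _ _ hn', Complex.cpow_one, add_comm (n : ℂ) s]
    have hpow : (n : ℂ) ^ s ≠ 0 := by simp [Complex.cpow_eq_zero_iff, hn']
    field_simp
  · push Not at hs
    obtain ⟨m, rfl⟩ := hs
    rw [Complex.Gamma_neg_nat_eq_zero, inv_zero]
    refine tendsto_const_nhds.congr' ?_
    filter_upwards [eventually_gt_atTop m] with n hn
    rw [ascPochhammer_eval_neg_coe_nat_of_lt hn, zero_div, zero_div]

theorem norm_ascPochhammer_div_factorial_succ_le (s : ℂ) (n : ℕ) :
    ‖(ascPochhammer ℂ (n + 1)).eval s / ((n + 1)! : ℂ)‖ ≤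
      (‖s‖ + 1) * ‖(ascPochhammer ℂ n).eval s / (n ! : ℂ)‖ := by
  have hn : (0 : ℝ) < n + 1 := n.cast_add_one_pos
  have hratio : ‖(s + n) / (n + 1)‖ ≤ ‖s‖ + 1 := by
    rw [norm_div, ← Nat.cast_add_one, Complex.norm_natCast, Nat.cast_add_one, div_le_iff₀ hn]
    have htri : ‖s + n‖ ≤ ‖s‖ + n := (norm_add_le _ _).trans_eq (by rw [Complex.norm_natCast])
    nlinarith [norm_nonneg s, n.cast_nonneg (α := ℝ)]
  rw [ascPochhammer_succ_eval, Nat.factorial_succ, Nat.cast_mul, mul_comm ((n + 1 : ℕ) : ℂ),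
    mul_div_mul_comm, norm_mul, mul_comm, Nat.cast_add_one]
  gcongr

end Pochhammer

section HypergeometricCoefficient

variable {a b c z : ℂ}

theorem hyp2F1_eq_tsum (a b c z : ℂ) :
    hyp2F1 a b c z = ∑' n, ordinaryHypergeometricCoefficient a b c n * z ^ n := by
  refine tsum_congr fun n => ?_
  rw [ordinaryHypergeometricCoefficient, div_eq_mul_inv, mul_inv]
  ring

theorem tendsto_ordinaryHypergeometricCoefficient (a b : ℂ) (hc : ∀ m : ℕ, c ≠ -m) :
    Tendsto
      (fun n : ℕ => ordinaryHypergeometricCoefficient a b c n / (1 / (n : ℂ) ^ (c - a - b + 1)))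
      atTop (𝓝 (Complex.Gamma c / (Complex.Gamma a * Complex.Gamma b))) := by
  have hlim := ((tendsto_ascPochhammer_div_factorial a).mul
    (tendsto_ascPochhammer_div_factorial b)).div (tendsto_ascPochhammer_div_factorial c)
    (inv_ne_zero (Complex.Gamma_ne_zero hc))
  rw [← mul_inv, inv_div_inv] at hlim
  refine hlim.congr' ?_
  filter_upwards [eventually_ne_atTop 0] with n hn
  have hn' : (n : ℂ) ≠ 0 := Nat.cast_ne_zero.mpr hn
  have hfact : (n ! : ℂ) ≠ 0 := Nat.cast_ne_zero.mpr n.factorial_ne_zero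
  have hpow (s : ℂ) : (n : ℂ) ^ s ≠ 0 := by simp [Complex.cpow_eq_zero_iff, hn']
  have hpoch := ascPochhammer_eval_ne_zero hc n
  have hexp : (n : ℂ) ^ (c - a - b + 1) =
      (n : ℂ) ^ (c - 1) / ((n : ℂ) ^ (a - 1) * (n : ℂ) ^ (b - 1)) := by
    rw [← Complex.cpow_add _ _ hn', ← Complex.cpow_sub _ _ hn']
    ring_nf
  rw [hexp, ordinaryHypergeometricCoefficient]
  have ha := hpow (a - 1)
  have hb := hpow (b - 1)
  have hc := hpow (c - 1)
  simp only [Pi.div_apply]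
  field_simp

theorem summable_ordinaryHypergeometricCoefficient (hc : ∀ m : ℕ, c ≠ -m)
    (h : a.re + b.re < c.re) : Summable (ordinaryHypergeometricCoefficient a b c) := by
  refine summable_of_isBigO_nat'
    (Complex.summable_one_div_nat_cpow (p := c - a - b + 1).mpr ?_)
    (isBigO_of_div_tendsto_nhds ?_ _ (tendsto_ordinaryHypergeometricCoefficient a b hc))
  · simp only [Complex.add_re, Complex.sub_re, Complex.one_re]
    linarith
  · filter_upwards [eventually_ne_atTop 0] with n hn h0
    simp [Complex.cpow_eq_zero_iff, hn] at h0

theorem not_summable_ordinaryHypergeometricCoefficient (ha : ∀ m : ℕ, a ≠ -m)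
    (hb : ∀ m : ℕ, b ≠ -m) (hc : ∀ m : ℕ, c ≠ -m) (h : c.re ≤ a.re + b.re) :
    ¬ Summable (ordinaryHypergeometricCoefficient a b c) := by
  intro hsum
  have hΓ : Complex.Gamma c / (Complex.Gamma a * Complex.Gamma b) ≠ 0 :=
    div_ne_zero (Complex.Gamma_ne_zero hc)
      (mul_ne_zero (Complex.Gamma_ne_zero ha) (Complex.Gamma_ne_zero hb))
  have htheta := isTheta_of_div_tendsto_nhds_ne_zero
    (tendsto_ordinaryHypergeometricCoefficient a b hc) hΓ
  have hre := Complex.summable_one_div_nat_cpow.mp (summable_of_isBigO_nat' hsum htheta.1)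
  simp only [Complex.add_re, Complex.sub_re, Complex.one_re] at hre
  linarith

theorem hyp2F1_one_eq_zero (ha : ∀ m : ℕ, a ≠ -m) (hb : ∀ m : ℕ, b ≠ -m) (hc : ∀ m : ℕ, c ≠ -m)
    (h : c.re ≤ a.re + b.re) : hyp2F1 a b c 1 = 0 := by
  simp only [hyp2F1_eq_tsum, one_pow, mul_one]
  exact tsum_eq_zero_of_not_summable
    (not_summable_ordinaryHypergeometricCoefficient ha hb hc h)

theorem summable_ordinaryHypergeometricCoefficient_mul_pow (hc : ∀ m : ℕ, c ≠ -m)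
    (hz : ‖z‖ ≤ 1) (h : ‖z‖ < 1 ∨ a.re + b.re < c.re) :
    Summable fun n => ordinaryHypergeometricCoefficient a b c n * z ^ n := by
  rcases h with hz | h
  · have hmem : z ∈ Metric.eball 0 (a.regularizedGaussHGFunSeries b c).radius := by
      rw [Metric.mem_eball, edist_zero_right]
      refine lt_of_lt_of_le ?_ (Complex.radius_regularizedGaussHGFunSeries_ge_one a b c)
      rwa [← ofReal_norm, ENNReal.ofReal_lt_one]
    have hsum := ((a.regularizedGaussHGFunSeries b c).summable hmem).mul_left (Complex.Gamma c)
    refine hsum.congr fun n => ?_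
    rw [FormalMultilinearSeries.apply_eq_pow_smul_coeff, smul_eq_mul,
      ← Complex.Gamma_inv_mul_ordinaryHypergeometricSeries_eq hc, ordinaryHypergeometricSeries,
      FormalMultilinearSeries.coeff_ofScalars]
    have := Complex.Gamma_ne_zero hc
    field_simp
  · refine (summable_ordinaryHypergeometricCoefficient hc h).norm.of_norm_bounded fun n => ?_
    rw [norm_mul, norm_pow]
    exact mul_le_of_le_one_right (norm_nonneg _) (pow_le_one₀ (norm_nonneg z) hz)

theorem hasSum_one_sub_cpow_neg (s : ℂ) (hz : ‖z‖ < 1) :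
    HasSum (fun n => (ascPochhammer ℂ n).eval s / n ! * z ^ n) ((1 - z) ^ (-s)) := by
  have hmem : z ∈ Metric.eball (0 : ℂ) 1 := by
    rwa [Metric.mem_eball, edist_zero_right, ← ofReal_norm, ENNReal.ofReal_lt_one]
  have hsum := (Complex.one_div_one_sub_cpow_hasFPowerSeriesOnBall_zero s).hasSum hmem
  simp only [zero_add, one_div, ← Complex.cpow_neg,
    FormalMultilinearSeries.ofScalars_apply_eq, smul_eq_mul, ← Ring.multichoose_eq] at hsum
  convert! hsum using 3 with n
  rw [div_eq_iff (Nat.cast_ne_zero.mpr n.factorial_ne_zero), mul_comm, ← nsmul_eq_mul,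
    Ring.factorial_nsmul_multichoose_eq_ascPochhammer, Polynomial.ascPochhammer_smeval_eq_eval]

theorem ascPochhammer_two_mul_div_factorial {K : Type*} [Field K] [CharZero K] (k : ℕ) (s : K) :
    (ascPochhammer K (2 * k)).eval s / (2 * k)! =
      ordinaryHypergeometricCoefficient (s / 2) ((s + 1) / 2) (1 / 2) k := by
  rw [ascPochhammer_two_mul_eval, factorial_two_mul_eq_ascPochhammer,
    ordinaryHypergeometricCoefficient]
  have h4 : (4 : K) ^ k ≠ 0 := pow_ne_zero _ (by norm_num)
  field_simp

end HypergeometricCoefficient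

section Beta

theorem betaIntegral_add_natCast_left {u v : ℂ} (hu : 0 < u.re) (hv : 0 < v.re) (k : ℕ) :
    Complex.betaIntegral (u + k) v =
      (ascPochhammer ℂ k).eval u / (ascPochhammer ℂ k).eval (u + v) * Complex.betaIntegral u v := by
  have huv : 0 < (u + v).re := add_pos hu hv
  have huk : 0 < (u + k).re := by simpa using add_pos_of_pos_of_nonneg hu k.cast_nonneg
  rw [Complex.betaIntegral_eq_Gamma_mul_div _ _ huk hv,
    Complex.betaIntegral_eq_Gamma_mul_div _ _ hu hv, add_right_comm,
    ← Complex.Gamma_add_nat_div_Gamma_eq u (ne_neg_natCast_of_re_pos hu),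
    ← Complex.Gamma_add_nat_div_Gamma_eq (u + v) (ne_neg_natCast_of_re_pos huv)]
  have := Complex.Gamma_ne_zero_of_re_pos hu
  have := Complex.Gamma_ne_zero_of_re_pos huv
  field_simp

theorem ascPochhammer_two_mul_div_factorial_mul_betaIntegral (s : ℂ) {b : ℂ} (hb : 0 < b.re)
    (k : ℕ) :
    (ascPochhammer ℂ (2 * k)).eval s / (2 * k)! * Complex.betaIntegral (1 / 2 + k) b =
      Complex.betaIntegral (1 / 2) b *
        ordinaryHypergeometricCoefficient (s / 2) ((s + 1) / 2) (b + 1 / 2) k := by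
  have half_pos : 0 < (1 / 2 : ℂ).re := by norm_num
  have hne := ascPochhammer_eval_ne_zero (ne_neg_natCast_of_re_pos half_pos) k
  rw [ascPochhammer_two_mul_div_factorial, betaIntegral_add_natCast_left half_pos hb,
    ordinaryHypergeometricCoefficient, ordinaryHypergeometricCoefficient, add_comm b]
  field_simp

end Beta

section EvenOdd

variable {E : Type*} [NormedAddCommGroup E] {f : ℝ → E} {r : ℝ}

theorem intervalIntegrable_neg_of_even (hf : Function.Even f)
    (hi : IntervalIntegrable f volume 0 r) : IntervalIntegrable f volume (-r) r := by
  refine IntervalIntegrable.trans (b := 0) ?_ hi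
  rw [IntervalIntegrable.iff_comp_neg]
  simpa only [hf _, neg_neg, neg_zero] using hi.symm

variable [NormedSpace ℝ E]

theorem integral_neg_self_of_even (hf : Function.Even f)
    (hi : IntervalIntegrable f volume 0 r) :
    ∫ t in -r..r, f t = (2 : ℝ) • ∫ t in 0..r, f t := by
  have hneg : IntervalIntegrable f volume (-r) 0 :=
    (intervalIntegrable_neg_of_even hf hi).trans hi.symm
  have hreflect := intervalIntegral.integral_comp_neg (a := 0) (b := r) f
  simp only [hf _, neg_zero] at hreflect
  rw [← integral_add_adjacent_intervals hneg hi, ← hreflect, two_smul]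

theorem integral_neg_self_of_odd (hf : Function.Odd f) : ∫ t in -r..r, f t = 0 := by
  have : IsAddTorsionFree E := .of_isTorsionFree ℝ E
  have hreflect := intervalIntegral.integral_comp_neg (a := -r) (b := r) f
  simp only [hf _, neg_neg, intervalIntegral.integral_neg] at hreflect
  exact self_eq_neg.mp hreflect.symm

end EvenOdd

section Gegenbauer

/-- The Gegenbauer (ultraspherical) weight `(1 - t²) ^ (b - 1)` on `[-1, 1]`. -/
noncomputable def gegenbauerWeight (b : ℂ) (t : ℝ) : ℂ :=
  ((1 - t ^ 2 : ℝ) : ℂ) ^ (b - 1)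

/-- The `n`-th moment of the Gegenbauer weight. -/
noncomputable def gegenbauerMoment (b : ℂ) (n : ℕ) : ℂ :=
  ∫ t in (-1 : ℝ)..1, (t : ℂ) ^ n * gegenbauerWeight b t

/-- The `n`-th absolute moment of the Gegenbauer weight. -/
noncomputable def gegenbauerAbsMoment (b : ℂ) (n : ℕ) : ℝ :=
  ∫ t in (-1 : ℝ)..1, ‖(t : ℂ) ^ n * gegenbauerWeight b t‖

/-- The integral of `(1 - tz) ^ (-s)` against the Gegenbauer weight. -/
noncomputable def gegenbauerIntegral (s b z : ℂ) : ℂ :=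
  ∫ t in (-1 : ℝ)..1, (1 - t * z) ^ (-s) * gegenbauerWeight b t

variable {s b z : ℂ}

theorem gegenbauerWeight_neg (b : ℂ) (t : ℝ) : gegenbauerWeight b (-t) = gegenbauerWeight b t := by
  rw [gegenbauerWeight, neg_sq, gegenbauerWeight]

theorem gegenbauerWeight_ofReal_re (b : ℂ) {t : ℝ} (ht : t ∈ Ioo (-1 : ℝ) 1) :
    gegenbauerWeight b.re t = (‖gegenbauerWeight b t‖ : ℝ) := by
  have hpos : 0 < 1 - t ^ 2 := by nlinarith [ht.1, ht.2]
  rw [gegenbauerWeight, gegenbauerWeight, Complex.norm_cpow_eq_rpow_re_of_pos hpos,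
    Complex.ofReal_cpow hpos.le, Complex.sub_re, Complex.one_re]
  push_cast
  rfl

theorem even_pow_two_mul_mul_gegenbauerWeight (b : ℂ) (k : ℕ) :
    Function.Even fun t : ℝ => (t : ℂ) ^ (2 * k) * gegenbauerWeight b t := fun t => by
  simp only [gegenbauerWeight_neg, Complex.ofReal_neg, (even_two_mul k).neg_pow]

theorem odd_pow_two_mul_add_one_mul_gegenbauerWeight (b : ℂ) (k : ℕ) :
    Function.Odd fun t : ℝ => (t : ℂ) ^ (2 * k + 1) * gegenbauerWeight b t := fun t => by
  simp only [gegenbauerWeight_neg, Complex.ofReal_neg, (odd_two_mul_add_one k).neg_pow, neg_mul]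

theorem deriv_sq_smul_beta_integrand (b : ℂ) (k : ℕ) {t : ℝ} (ht : 0 < t) :
    (2 * t) • (((t ^ 2 : ℝ) : ℂ) ^ ((1 / 2 + k : ℂ) - 1) * (1 - ((t ^ 2 : ℝ) : ℂ)) ^ (b - 1)) =
      2 * ((t : ℂ) ^ (2 * k) * gegenbauerWeight b t) := by
  have ht' : (t : ℂ) ≠ 0 := Complex.ofReal_ne_zero.mpr ht.ne'
  have hpow : ((t ^ 2 : ℝ) : ℂ) ^ ((1 / 2 + k : ℂ) - 1) * t = (t : ℂ) ^ (2 * k) := by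
    rw [show (1 / 2 + k : ℂ) - 1 = k - 1 / 2 by ring, Complex.ofReal_pow,
      Complex.cpow_sub _ _ (pow_ne_zero 2 ht'), Complex.cpow_natCast, ← pow_mul, one_div]
    rw [Complex.sq_cpow_two_inv (by simpa using ht), div_mul_cancel₀ _ ht']
  rw [gegenbauerWeight, ← hpow, Complex.real_smul]
  push_cast
  ring

theorem intervalIntegrable_pow_two_mul_mul_gegenbauerWeight (hb : 0 < b.re) (k : ℕ) :
    IntervalIntegrable (fun t : ℝ => (t : ℂ) ^ (2 * k) * gegenbauerWeight b t) volume 0 1 := by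
  have hk : 0 < (1 / 2 + k : ℂ).re := by
    simp only [Complex.add_re, Complex.natCast_re]
    norm_num
    positivity
  have hbeta := Complex.betaIntegral_convergent hk hb
  rw [intervalIntegrable_iff_integrableOn_Icc_of_le zero_le_one] at hbeta
  have hsubst := (integrableOn_Icc_deriv_smul_iff_of_deriv_nonneg (f := fun t : ℝ => t ^ 2)
    (f' := fun t => 2 * t) (a := 0) (b := 1)
    (g := fun u : ℝ => (u : ℂ) ^ ((1 / 2 + k : ℂ) - 1) * (1 - (u : ℂ)) ^ (b - 1))
    (by fun_prop) (fun t _ => by simpa using hasDerivAt_pow 2 t)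
    (fun t ht => by linarith [ht.1]) zero_le_one).mpr (by simpa using hbeta)
  rw [integrableOn_Icc_iff_integrableOn_Ioo] at hsubst
  have hdouble := hsubst.congr_fun (fun t ht => deriv_sq_smul_beta_integrand b k ht.1)
    measurableSet_Ioo
  rw [intervalIntegrable_iff_integrableOn_Ioo_of_le zero_le_one]
  exact (integrable_const_mul_iff (isUnit_iff_ne_zero.mpr two_ne_zero) _).mp hdouble

theorem intervalIntegrable_pow_mul_gegenbauerWeight (hb : 0 < b.re) (n : ℕ) :
    IntervalIntegrable (fun t : ℝ => (t : ℂ) ^ n * gegenbauerWeight b t) volume (-1) 1 := by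
  have hhalf := intervalIntegrable_pow_two_mul_mul_gegenbauerWeight hb 0
  have hweight := intervalIntegrable_neg_of_even (even_pow_two_mul_mul_gegenbauerWeight b 0) hhalf
  simp only [mul_zero, pow_zero, one_mul] at hweight
  exact hweight.continuousOn_mul (by fun_prop)

theorem gegenbauerMoment_two_mul (hb : 0 < b.re) (k : ℕ) :
    gegenbauerMoment b (2 * k) = Complex.betaIntegral (1 / 2 + k) b := by
  have hsubst := integral_Icc_deriv_smul_of_deriv_nonneg (f := fun t : ℝ => t ^ 2)
    (f' := fun t => 2 * t) (a := 0) (b := 1)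
    (g := fun u : ℝ => (u : ℂ) ^ ((1 / 2 + k : ℂ) - 1) * (1 - (u : ℂ)) ^ (b - 1))
    (by fun_prop) (fun t _ => by simpa using hasDerivAt_pow 2 t)
    (fun t ht => by linarith [ht.1]) zero_le_one
  rw [gegenbauerMoment, integral_neg_self_of_even (even_pow_two_mul_mul_gegenbauerWeight b k)
    (intervalIntegrable_pow_two_mul_mul_gegenbauerWeight hb k), Complex.betaIntegral,
    integral_of_le zero_le_one, integral_of_le zero_le_one, ← integral_Icc_eq_integral_Ioc,
    ← integral_Icc_eq_integral_Ioc]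
  simp only [zero_pow two_ne_zero, one_pow] at hsubst
  rw [← hsubst, integral_Icc_eq_integral_Ioo, integral_Icc_eq_integral_Ioo,
    setIntegral_congr_fun measurableSet_Ioo fun t ht => deriv_sq_smul_beta_integrand b k ht.1,
    MeasureTheory.integral_const_mul, Complex.real_smul, Complex.ofReal_ofNat]

theorem gegenbauerMoment_two_mul_add_one (b : ℂ) (k : ℕ) : gegenbauerMoment b (2 * k + 1) = 0 :=
  integral_neg_self_of_odd (odd_pow_two_mul_add_one_mul_gegenbauerWeight b k)

theorem gegenbauerAbsMoment_nonneg (b : ℂ) (n : ℕ) : 0 ≤ gegenbauerAbsMoment b n :=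
  integral_nonneg (by norm_num) fun _ _ => norm_nonneg _

theorem gegenbauerAbsMoment_two_mul (hb : 0 < b.re) (k : ℕ) :
    gegenbauerAbsMoment b (2 * k) = ‖Complex.betaIntegral (1 / 2 + k) b.re‖ := by
  have hcongr : EqOn (fun t : ℝ => (t : ℂ) ^ (2 * k) * gegenbauerWeight b.re t)
      (fun t : ℝ => ((‖(t : ℂ) ^ (2 * k) * gegenbauerWeight b t‖ : ℝ) : ℂ)) (Ioo (-1) 1) :=
    fun t ht => by
      simp only [gegenbauerWeight_ofReal_re b ht, norm_mul, norm_pow, Complex.norm_real,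
        Real.norm_eq_abs, (even_two_mul k).pow_abs]
      push_cast
      rfl
  rw [← gegenbauerMoment_two_mul (by rwa [Complex.ofReal_re]), gegenbauerMoment,
    integral_congr_Ioo_of_le (by norm_num) hcongr, intervalIntegral.integral_ofReal,
    ← gegenbauerAbsMoment, Complex.norm_real, Real.norm_of_nonneg (gegenbauerAbsMoment_nonneg b _)]

theorem gegenbauerAbsMoment_succ_le (hb : 0 < b.re) (n : ℕ) :
    gegenbauerAbsMoment b (n + 1) ≤ gegenbauerAbsMoment b n := by
  refine intervalIntegral.integral_mono_on (by norm_num)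
    (intervalIntegrable_pow_mul_gegenbauerWeight hb _).norm
    (intervalIntegrable_pow_mul_gegenbauerWeight hb _).norm fun t ht => ?_
  rw [pow_succ', mul_assoc, norm_mul]
  refine mul_le_of_le_one_left (norm_nonneg _) ?_
  rw [Complex.norm_real]
  exact abs_le.mpr ht

theorem summable_norm_mul_gegenbauerAbsMoment_two_mul (hb : 0 < b.re) (hz : ‖z‖ ≤ 1)
    (h : ‖z‖ < 1 ∨ s.re < b.re) :
    Summable fun k : ℕ =>
      ‖(ascPochhammer ℂ (2 * k)).eval s / (2 * k)! * z ^ (2 * k)‖ *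
        gegenbauerAbsMoment b (2 * k) := by
  have hc : 0 < (b.re + 1 / 2 : ℂ).re := by
    simp only [Complex.add_re, Complex.ofReal_re]
    norm_num
    linarith
  have hz2 : ‖z ^ 2‖ ≤ 1 := by rw [norm_pow]; exact pow_le_one₀ (norm_nonneg z) hz
  have hconv : ‖z ^ 2‖ < 1 ∨ (s / 2).re + ((s + 1) / 2).re < (b.re + 1 / 2 : ℂ).re := by
    refine h.imp (fun hz => ?_) fun hre => ?_
    · rw [norm_pow]
      exact pow_lt_one₀ (norm_nonneg z) hz two_ne_zero
    · simp only [Complex.div_ofNat_re, Complex.add_re, Complex.one_re, Complex.ofReal_re]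
      linarith
  have hsum := summable_ordinaryHypergeometricCoefficient_mul_pow
    (ne_neg_natCast_of_re_pos hc) hz2 hconv
  refine (hsum.norm.mul_left ‖Complex.betaIntegral (1 / 2) b.re‖).congr fun k => ?_
  rw [gegenbauerAbsMoment_two_mul hb, ← norm_mul, ← norm_mul, ← mul_assoc,
    ← ascPochhammer_two_mul_div_factorial_mul_betaIntegral s (by rwa [Complex.ofReal_re]),
    ← pow_mul, mul_right_comm]

theorem norm_mul_gegenbauerAbsMoment_succ_le (hb : 0 < b.re) (hz : ‖z‖ ≤ 1) (n : ℕ) :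
    ‖(ascPochhammer ℂ (n + 1)).eval s / (n + 1)! * z ^ (n + 1)‖ * gegenbauerAbsMoment b (n + 1) ≤
      (‖s‖ + 1) * (‖(ascPochhammer ℂ n).eval s / n ! * z ^ n‖ * gegenbauerAbsMoment b n) := by
  rw [norm_mul, norm_mul, norm_pow, norm_pow, ← mul_assoc, ← mul_assoc]
  gcongr ?_ * ?_ * ?_
  · exact gegenbauerAbsMoment_nonneg b _
  · exact norm_ascPochhammer_div_factorial_succ_le s n
  · exact pow_le_pow_of_le_one (norm_nonneg z) hz n.le_succ
  · exact gegenbauerAbsMoment_succ_le hb n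

theorem summable_norm_mul_gegenbauerAbsMoment (hb : 0 < b.re) (hz : ‖z‖ ≤ 1)
    (h : ‖z‖ < 1 ∨ s.re < b.re) :
    Summable fun n : ℕ =>
      ‖(ascPochhammer ℂ n).eval s / n ! * z ^ n‖ * gegenbauerAbsMoment b n :=
  summable_of_summable_even (C := ‖s‖ + 1)
    (fun _ => mul_nonneg (norm_nonneg _) (gegenbauerAbsMoment_nonneg b _))
    (norm_mul_gegenbauerAbsMoment_succ_le hb hz)
    (summable_norm_mul_gegenbauerAbsMoment_two_mul hb hz h)

theorem hasSum_gegenbauerIntegral (hb : 0 < b.re) (hz : ‖z‖ ≤ 1)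
    (h : ‖z‖ < 1 ∨ s.re < b.re) :
    HasSum (fun n => (ascPochhammer ℂ n).eval s / n ! * z ^ n * gegenbauerMoment b n)
      (gegenbauerIntegral s b z) := by
  have hle : (-1 : ℝ) ≤ 1 := by norm_num
  have hbinom : EqOn (fun t : ℝ => (1 - t * z) ^ (-s) * gegenbauerWeight b t)
      (fun t : ℝ => ∑' n : ℕ, (ascPochhammer ℂ n).eval s / n ! * z ^ n *
        ((t : ℂ) ^ n * gegenbauerWeight b t)) (Ioo (-1) 1) := fun t ht => by
    have htz : ‖(t : ℂ) * z‖ < 1 := by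
      rw [norm_mul, Complex.norm_real]
      exact mul_lt_one_of_nonneg_of_lt_one_left (norm_nonneg _) (abs_lt.mpr ht) hz
    change (1 - t * z) ^ (-s) * gegenbauerWeight b t = _
    rw [← ((hasSum_one_sub_cpow_neg s htz).mul_right (gegenbauerWeight b t)).tsum_eq]
    exact tsum_congr fun n => by rw [mul_pow]; ring
  have hint (n : ℕ) := ((intervalIntegrable_pow_mul_gegenbauerWeight hb n).const_mul
    ((ascPochhammer ℂ n).eval s / n ! * z ^ n)).1
  have hsum := hasSum_integral_of_summable_integral_norm hint <| by
    simpa only [norm_mul _ ((_ : ℂ) * gegenbauerWeight b _), MeasureTheory.integral_const_mul,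
      gegenbauerAbsMoment, integral_of_le hle] using summable_norm_mul_gegenbauerAbsMoment hb hz h
  rw [gegenbauerIntegral, integral_congr_Ioo_of_le hle hbinom]
  simpa only [MeasureTheory.integral_const_mul, gegenbauerMoment, integral_of_le hle] using hsum

theorem gegenbauerIntegral_eq_betaIntegral_mul_hyp2F1 (hb : 0 < b.re) (hz : ‖z‖ ≤ 1)
    (h : ‖z‖ < 1 ∨ s.re < b.re) :
    gegenbauerIntegral s b z =
      Complex.betaIntegral (1 / 2) b * hyp2F1 (s / 2) ((s + 1) / 2) (b + 1 / 2) (z ^ 2) := by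
  have hsum := hasSum_gegenbauerIntegral hb hz h
  have hinj : Function.Injective (2 * · : ℕ → ℕ) := mul_right_injective₀ two_ne_zero
  rw [← hinj.hasSum_iff fun n hn => ?odd] at hsum
  case odd =>
    obtain ⟨k, rfl | rfl⟩ := n.even_or_odd'
    · exact absurd ⟨k, rfl⟩ hn
    · rw [gegenbauerMoment_two_mul_add_one, mul_zero]
  rw [← hsum.tsum_eq, hyp2F1_eq_tsum, ← tsum_mul_left]
  refine tsum_congr fun k => ?_
  rw [Function.comp_apply, gegenbauerMoment_two_mul hb, mul_right_comm,
    ascPochhammer_two_mul_div_factorial_mul_betaIntegral s hb, pow_mul, mul_assoc]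

theorem gegenbauerIntegral_neg (s b z : ℂ) :
    gegenbauerIntegral s b (-z) = gegenbauerIntegral s b z := by
  have hreflect := intervalIntegral.integral_comp_neg (a := -1) (b := 1)
    fun t : ℝ => (1 - t * z) ^ (-s) * gegenbauerWeight b t
  rw [neg_neg] at hreflect
  rw [gegenbauerIntegral, gegenbauerIntegral, ← hreflect]
  simp only [gegenbauerWeight_neg, Complex.ofReal_neg, neg_mul, mul_neg]

theorem gegenbauerWeight_mul_one_add_cpow (b : ℂ) {t : ℝ} (ht : t ∈ Ioo (-1 : ℝ) 1) :
    gegenbauerWeight b t * (1 + t : ℂ) ^ (1 - b) = (1 - t : ℂ) ^ (b - 1) := by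
  have hsub : 0 ≤ 1 - t := by linarith [ht.2]
  have hadd : 0 < 1 + t := by linarith [ht.1]
  have hne : (1 + t : ℂ) ≠ 0 := by exact_mod_cast hadd.ne'
  have hmul := Complex.mul_cpow_ofReal_nonneg hsub hadd.le (b - 1)
  push_cast at hmul
  rw [gegenbauerWeight, show 1 - t ^ 2 = (1 - t) * (1 + t) by ring]
  push_cast
  rw [hmul, mul_assoc, ← Complex.cpow_add _ _ hne, sub_add_sub_cancel, sub_self,
    Complex.cpow_zero, mul_one]

theorem gegenbauerIntegral_one_eq_zero (h : b.re ≤ s.re) : gegenbauerIntegral s b 1 = 0 := by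
  refine intervalIntegral.integral_undef fun hint => ?_
  have hright : IntervalIntegrable
      (fun t : ℝ => (1 - t * 1 : ℂ) ^ (-s) * gegenbauerWeight b t) volume 0 1 :=
    hint.mono_set (by
      rw [uIcc_of_le zero_le_one, uIcc_of_le (by norm_num)]
      exact Icc_subset_Icc_left (by norm_num))
  have hcont : ContinuousOn (fun t : ℝ => (1 + t : ℂ) ^ (1 - b)) (uIcc 0 1) := by
    refine ContinuousOn.cpow_const (by fun_prop) fun t ht => ?_
    rw [uIcc_of_le zero_le_one] at ht
    exact_mod_cast Complex.ofReal_mem_slitPlane.mpr (show 0 < 1 + t by linarith [ht.1])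
  have hprod := (hright.mul_continuousOn hcont).comp_sub_left 1
  rw [sub_self, sub_zero] at hprod
  have hpow : IntegrableOn (fun u : ℝ => (u : ℂ) ^ (b - 1 - s)) (Ioo 0 1) := by
    rw [← intervalIntegrable_iff_integrableOn_Ioo_of_le zero_le_one]
    refine hprod.symm.congr_uIoo fun u hu => ?_
    rw [uIoo_of_le zero_le_one] at hu
    have hu' : 1 - u ∈ Ioo (-1 : ℝ) 1 := ⟨by linarith [hu.2], by linarith [hu.1]⟩
    have hne : (u : ℂ) ≠ 0 := Complex.ofReal_ne_zero.mpr hu.1.ne'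
    change (1 - ((1 - u : ℝ) : ℂ) * 1) ^ (-s) * gegenbauerWeight b (1 - u) *
      (1 + ((1 - u : ℝ) : ℂ)) ^ (1 - b) = (u : ℂ) ^ (b - 1 - s)
    rw [mul_assoc, gegenbauerWeight_mul_one_add_cpow b hu', Complex.ofReal_sub, Complex.ofReal_one,
      mul_one, sub_sub_cancel, ← Complex.cpow_add _ _ hne, neg_add_eq_sub]
  have hre := (integrableOn_Ioo_cpow_iff one_pos).mp hpow
  simp only [Complex.sub_re, Complex.one_re] at hre
  linarith

theorem gegenbauerIntegral_ofReal_eq_betaIntegral_mul_hyp2F1 (hb : 0 < b.re) {x : ℝ}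
    (hx : |x| ≤ 1) :
    gegenbauerIntegral s b x =
      Complex.betaIntegral (1 / 2) b *
        hyp2F1 (s / 2) ((s + 1) / 2) (b + 1 / 2) ((x : ℂ) ^ 2) := by
  by_cases h : |x| < 1 ∨ s.re < b.re
  · rw [← Real.norm_eq_abs, ← Complex.norm_real] at hx h
    exact gegenbauerIntegral_eq_betaIntegral_mul_hyp2F1 hb hx h
  · -- Both the integral and the series diverge here, and both are `0` by convention.
    obtain ⟨hx1, hre⟩ : 1 ≤ |x| ∧ b.re ≤ s.re := by simpa only [not_or, not_lt] using h
    have hhalf : (1 / 2 : ℂ).re = 1 / 2 := by norm_num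
    have hseries : hyp2F1 (s / 2) ((s + 1) / 2) (b + 1 / 2) 1 = 0 := by
      refine hyp2F1_one_eq_zero (ne_neg_natCast_of_re_pos ?_) (ne_neg_natCast_of_re_pos ?_)
        (ne_neg_natCast_of_re_pos ?_) ?_ <;>
      simp only [Complex.div_ofNat_re, Complex.add_re, Complex.one_re, hhalf] <;>
      linarith
    rcases eq_or_eq_neg_of_abs_eq (le_antisymm hx hx1) with rfl | rfl
    · rw [Complex.ofReal_one, one_pow, hseries, gegenbauerIntegral_one_eq_zero hre, mul_zero]
    · rw [Complex.ofReal_neg, Complex.ofReal_one, gegenbauerIntegral_neg, neg_sq, one_pow, hseries,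
        gegenbauerIntegral_one_eq_zero hre, mul_zero]

end Gegenbauer

theorem stmt4_general (a b : ℂ) (hb : 0 < b.re) (x : ℝ) (hx : -1 ≤ x) (hx' : x ≤ 1) :
    (∫ t in (-1 : ℝ)..1, ((1 - t * x : ℝ) : ℂ) ^ (a - 1) * ((1 - t ^ 2 : ℝ) : ℂ) ^ (b - 1)) =
      eulerBeta (1 / 2) b * hyp2F1 ((1 - a) / 2) ((2 - a) / 2) (b + 1 / 2) ((x : ℂ) ^ 2) := by
  have hint : (∫ t in (-1 : ℝ)..1,
      ((1 - t * x : ℝ) : ℂ) ^ (a - 1) * ((1 - t ^ 2 : ℝ) : ℂ) ^ (b - 1)) =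
        gegenbauerIntegral (1 - a) b x := by
    simp only [gegenbauerIntegral, gegenbauerWeight, neg_sub]
    push_cast
    rfl
  rw [hint, gegenbauerIntegral_ofReal_eq_betaIntegral_mul_hyp2F1 hb (abs_le.mpr ⟨hx, hx'⟩),
    eulerBeta, ← Complex.betaIntegral_eq_Gamma_mul_div _ _ (by norm_num) hb,
    show 1 - a + 1 = 2 - a by ring]

theorem stmt4 (a b : ℂ) (ha : 0 < a.re) (hb : 0 < b.re) (x : ℝ) (hx : -1 ≤ x)
    (hx' : x ≤ 1) :
    (∫ t in (-1 : ℝ)..1, ((1 - t * x : ℝ) : ℂ) ^ (a - 1) * ((1 - t ^ 2 : ℝ) : ℂ) ^ (b - 1)) =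
      eulerBeta (1 / 2) b * hyp2F1 ((1 - a) / 2) ((2 - a) / 2) (b + 1 / 2) ((x : ℂ) ^ 2) :=
  stmt4_general a b hb x hx hx'
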